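/- arXiv:1811.00042 — 3 statements merged into one kernel-verified Lean document; each statement's English description precedes it below -/
import Mathlib

section
/- Let (R, m) be a Noetherian local ring of dimension 1, and let M, N be finite R-modules of dimension 1 with N Cohen–Macaulay (i.e., torsion free) and length_{R_P}(M_P) ≥ length_{R_P}(N_P) for every minimal prime P of dimension-1 support. Then for any non-zerodivisor x ∈ m (on R and N), length(M/xM) ≥ length(N/xN), with equality if and only if M is torsion free and length_{R_P}(M_P) = length_{R_P}(N_P) for all 1-dimensional primes P. -/
open CategoryTheory IsLocalRing

/-- The length of a module, as the Krull dimension of its lattice of submodules. -/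
noncomputable def mlen (R M : Type) [Ring R] [AddCommGroup M] [Module R M] : WithBot ℕ∞ :=
  Order.krullDim (Submodule R M)

/-- `extM R M N n` is `Ext^n_R(M, N)`. -/
noncomputable def extM (R : Type) [CommRing R] (M N : Type)
    [AddCommGroup M] [Module R M] [AddCommGroup N] [Module R N] (n : ℕ) : ModuleCat R :=
  ((Ext R (ModuleCat R) n).obj (Opposite.op (ModuleCat.of R M))).obj (ModuleCat.of R N)

/-- The length of the localization `M_P` over `R_P`. -/
noncomputable def locLen (R : Type) [CommRing R] (M : Type) [AddCommGroup M] [Module R M]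
    (P : PrimeSpectrum R) : WithBot ℕ∞ :=
  mlen (Localization.AtPrime P.asIdeal) (LocalizedModule P.asIdeal.primeCompl M)

/-!
Let `M[x]` be the kernel of multiplication by `x` on `M`. By the snake lemma, the difference
`length (M/xM) - length M[x]` is additive in short exact sequences. A prime filtration of `M`
therefore gives `length (M/xM) = length M[x] + ∑ P, length (M_P) * length (R/(P + xR))`, where `P`
runs over the primes in the support of `M` that do not contain `x`. As `N[x] = 0`, the lengths of
`M/xM` and `N/xN` are compared term by term; the coefficients `length (R/(P + xR))` are finite and
positive, so equality holds only if `M[x] = 0` and all terms agree.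
-/

section ENatSum

theorem enat_sum_eq_sum_iff_of_le {ι : Type*} {s : Finset ι} {f g : ι → ℕ∞}
    (hfg : ∀ i ∈ s, f i ≤ g i) (hg : ∑ i ∈ s, g i ≠ ⊤) :
    ∑ i ∈ s, f i = ∑ i ∈ s, g i ↔ ∀ i ∈ s, f i = g i := by
  classical
  refine ⟨fun h i hi ↦ (hfg i hi).antisymm ?_, Finset.sum_congr rfl⟩
  have hrest : ∑ j ∈ s.erase i, f j ≤ ∑ j ∈ s.erase i, g j :=
    Finset.sum_le_sum fun j hj ↦ hfg j (Finset.mem_of_mem_erase hj)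
  rw [← Finset.add_sum_erase s f hi, ← Finset.add_sum_erase s g hi] at h
  rw [← Finset.add_sum_erase s g hi] at hg
  exact (ENat.add_le_add_iff_right (WithTop.add_ne_top.mp hg).2).mp
    (h ▸ add_le_add_right hrest (f i))

theorem enat_sum_mul_eq_add_sum_mul_iff {ι : Type*} {s : Finset ι} {f g c : ι → ℕ∞} {t : ℕ∞}
    (hfg : ∀ i ∈ s, f i ≤ g i) (hc₀ : ∀ i ∈ s, c i ≠ 0) (hc : ∀ i ∈ s, c i ≠ ⊤)
    (htop : t + ∑ i ∈ s, g i * c i ≠ ⊤) :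
    ∑ i ∈ s, f i * c i = t + ∑ i ∈ s, g i * c i ↔ t = 0 ∧ ∀ i ∈ s, f i = g i := by
  have hle : ∀ i ∈ s, f i * c i ≤ g i * c i := fun i hi ↦ mul_le_mul_left (hfg i hi) _
  have hsum := Finset.sum_le_sum hle
  have hg : ∑ i ∈ s, g i * c i ≠ ⊤ := ne_top_of_le_ne_top htop le_add_self
  have hcancel : ∀ i ∈ s, f i * c i = g i * c i ↔ f i = g i := fun i hi ↦
    (ENat.mul_left_strictMono (hc₀ i hi) (hc i hi)).injective.eq_iff
  rw [← forall₂_congr hcancel, ← enat_sum_eq_sum_iff_of_le hle hg]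
  refine ⟨fun h ↦ ?_, fun ⟨ht, h⟩ ↦ by rw [ht, zero_add, h]⟩
  have hsum_eq := hsum.antisymm (h ▸ le_add_self)
  refine ⟨ENat.add_left_injective_of_ne_top hg ?_, hsum_eq⟩
  dsimp only
  rw [← h, zero_add, hsum_eq]

end ENatSum

section Length

variable {R A B C D E F : Type*} [CommRing R] [AddCommGroup A] [Module R A]
  [AddCommGroup B] [Module R B] [AddCommGroup C] [Module R C] [AddCommGroup D] [Module R D]
  [AddCommGroup E] [Module R E] [AddCommGroup F] [Module R F]

theorem length_eq_length_ker_add_length_range (f : A →ₗ[R] B) :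
    Module.length R A = Module.length R f.ker + Module.length R f.range :=
  Module.length_eq_add_of_exact f.ker.subtype f.rangeRestrict f.ker.subtype_injective
    f.surjective_rangeRestrict
    (LinearMap.exact_iff.mpr (by rw [f.ker_rangeRestrict, Submodule.range_subtype]))

theorem length_add_add_eq_of_exact {f₁ : A →ₗ[R] B} {f₂ : B →ₗ[R] C} {f₃ : C →ₗ[R] D}
    {f₄ : D →ₗ[R] E} {f₅ : E →ₗ[R] F} (h₁ : Function.Injective f₁)
    (h₁₂ : Function.Exact f₁ f₂) (h₂₃ : Function.Exact f₂ f₃) (h₃₄ : Function.Exact f₃ f₄)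
    (h₄₅ : Function.Exact f₄ f₅) (h₅ : Function.Surjective f₅) :
    Module.length R A + Module.length R C + Module.length R E =
      Module.length R B + Module.length R D + Module.length R F := by
  have hA := (LinearEquiv.ofInjective f₁ h₁).length_eq
  have hB := length_eq_length_ker_add_length_range f₂
  have hC := length_eq_length_ker_add_length_range f₃
  have hD := length_eq_length_ker_add_length_range f₄
  have hE := length_eq_length_ker_add_length_range f₅
  rw [LinearMap.exact_iff.mp h₁₂] at hB
  rw [LinearMap.exact_iff.mp h₂₃] at hC
  rw [LinearMap.exact_iff.mp h₃₄] at hD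
  rw [LinearMap.exact_iff.mp h₄₅, LinearMap.range_eq_top.mpr h₅, Module.length_top] at hE
  rw [hA, hB, hC, hD, hE]
  ring

end Length

section Torsion

open scoped Pointwise

variable {R A B C : Type*} [CommRing R] [AddCommGroup A] [Module R A]
  [AddCommGroup B] [Module R B] [AddCommGroup C] [Module R C] (x : R)

/-- The map induced by `f` on `x`-torsion; the counterpart for kernels of `QuotSMulTop.map x f`. -/
def torsionByMap (f : A →ₗ[R] B) : Submodule.torsionBy R A x →ₗ[R] Submodule.torsionBy R B x :=
  f.restrict fun a ha ↦ by
    rw [Submodule.mem_torsionBy_iff] at ha ⊢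
    rw [← map_smul, ha, map_zero]

theorem torsionByMap_injective {f : A →ₗ[R] B} (hf : Function.Injective f) :
    Function.Injective (torsionByMap x f) :=
  fun _ _ h ↦ Subtype.ext (hf (congrArg Subtype.val h))

theorem torsionByMap_exact {f : A →ₗ[R] B} {g : B →ₗ[R] C} (hf : Function.Injective f)
    (hfg : Function.Exact f g) : Function.Exact (torsionByMap x f) (torsionByMap x g) := by
  rintro ⟨b, hb⟩
  constructor
  · intro h
    obtain ⟨a, rfl⟩ := (hfg b).mp (congrArg Subtype.val h)
    refine ⟨⟨a, hf ?_⟩, rfl⟩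
    rw [map_zero]
    exact (map_smul f x a).trans hb
  · rintro ⟨a, ha⟩
    exact Subtype.ext ((hfg b).mpr ⟨a, congrArg Subtype.val ha⟩)

theorem exact_smul_mkQ_smul_top : Function.Exact (DistribSMul.toLinearMap R A x)
    (Submodule.mkQ (x • (⊤ : Submodule R A))) := by
  rw [LinearMap.exact_iff, Submodule.ker_mkQ, Submodule.pointwise_smul_def, Submodule.map_top]

theorem length_torsionBy_add_length_quotSMulTop_of_exact {f : A →ₗ[R] B} {g : B →ₗ[R] C}
    (hf : Function.Injective f) (hg : Function.Surjective g) (hfg : Function.Exact f g) :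
    Module.length R (Submodule.torsionBy R A x) + Module.length R (Submodule.torsionBy R C x) +
        Module.length R (QuotSMulTop x B) =
      Module.length R (Submodule.torsionBy R B x) + Module.length R (QuotSMulTop x A) +
        Module.length R (QuotSMulTop x C) := by
  have hxf : f ∘ₗ DistribSMul.toLinearMap R A x = DistribSMul.toLinearMap R B x ∘ₗ f :=
    LinearMap.ext (map_smul f x)
  have hxg : g ∘ₗ DistribSMul.toLinearMap R B x = DistribSMul.toLinearMap R C x ∘ₗ g :=
    LinearMap.ext (map_smul g x)
  exact length_add_add_eq_of_exact (torsionByMap_injective x hf) (torsionByMap_exact x hf hfg)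
    (SnakeLemma.exact_δ'_right _ _ _ f g hfg f g hfg hxf hxg _
      (LinearMap.exact_subtype_ker_map _) _ (LinearMap.exact_subtype_ker_map _) _
      (exact_smul_mkQ_smul_top x) hg hf (torsionByMap x g) rfl Subtype.val_injective)
    (SnakeLemma.exact_δ'_left _ _ _ f g hfg f g hfg hxf hxg _
      (LinearMap.exact_subtype_ker_map _) _ (exact_smul_mkQ_smul_top x) _
      (exact_smul_mkQ_smul_top x) hg hf (QuotSMulTop.map x f) rfl (Submodule.mkQ_surjective _))
    (QuotSMulTop.map_exact x hfg hg) (QuotSMulTop.map_surjective x hg)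

theorem length_torsionBy_congr (e : A ≃ₗ[R] B) :
    Module.length R (Submodule.torsionBy R A x) = Module.length R (Submodule.torsionBy R B x) :=
  le_antisymm (Module.length_le_of_injective _ (torsionByMap_injective x e.injective))
    (Module.length_le_of_injective _ (torsionByMap_injective x e.symm.injective))

theorem length_torsionBy_eq_zero_iff :
    Module.length R (Submodule.torsionBy R A x) = 0 ↔ IsSMulRegular A x := by
  rw [Module.length_eq_zero_iff, Submodule.subsingleton_iff_eq_bot,
    isSMulRegular_iff_torsionBy_eq_bot]

variable {x}

theorem length_quotSMulTop_eq_length_torsionBy_of_mem_annihilator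
    (hx : x ∈ Module.annihilator R A) :
    Module.length R (QuotSMulTop x A) = Module.length R (Submodule.torsionBy R A x) := by
  rw [Module.mem_annihilator] at hx
  have htors : Submodule.torsionBy R A x = ⊤ := Submodule.eq_top_iff'.mpr hx
  have hsmul : x • (⊤ : Submodule R A) = ⊥ := by
    rw [Submodule.pointwise_smul_def, Submodule.map_top, LinearMap.range_eq_bot]
    exact LinearMap.ext hx
  rw [htors, Module.length_top, (Submodule.quotEquivOfEqBot _ hsmul).length_eq]

end Torsion

section LocalizedLength

variable {R A B C : Type*} [CommRing R] [AddCommGroup A] [Module R A]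
  [AddCommGroup B] [Module R B] [AddCommGroup C] [Module R C]

/-- The length of `A_P` over `R_P`, with values in `ℕ∞`, for a module `A` in any universe. -/
noncomputable def localizedLength (A : Type*) [AddCommGroup A] [Module R A]
    (P : PrimeSpectrum R) : ℕ∞ :=
  Module.length (Localization.AtPrime P.asIdeal) (LocalizedModule P.asIdeal.primeCompl A)

theorem localizedLength_eq_zero_iff {P : PrimeSpectrum R} :
    localizedLength A P = 0 ↔ P ∉ Module.support R A :=
  Module.length_eq_zero_iff.trans Module.notMem_support_iff.symm

theorem localizedLength_eq_add_of_exact {f : A →ₗ[R] B} {g : B →ₗ[R] C}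
    (hf : Function.Injective f) (hg : Function.Surjective g) (hfg : Function.Exact f g)
    (P : PrimeSpectrum R) :
    localizedLength B P = localizedLength A P + localizedLength C P :=
  Module.length_eq_add_of_exact (LocalizedModule.map P.asIdeal.primeCompl f)
    (LocalizedModule.map P.asIdeal.primeCompl g) (LocalizedModule.map_injective _ _ hf)
    (LocalizedModule.map_surjective _ _ hg) (LocalizedModule.map_exact _ f g hfg)

theorem localizedLength_congr (e : A ≃ₗ[R] B) (P : PrimeSpectrum R) :
    localizedLength A P = localizedLength B P := by
  have hexact : Function.Exact e (0 : B →ₗ[R] PUnit) :=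
    (LinearMap.exact_zero_iff_surjective _ _).mpr e.surjective
  rw [localizedLength_eq_add_of_exact e.injective (Function.surjective_to_subsingleton _) hexact,
    localizedLength_eq_zero_iff (A := PUnit).mpr (by simp [Module.support_eq_empty]), add_zero]

theorem mem_support_quotient_iff {I : Ideal R} {P : PrimeSpectrum R} :
    P ∈ Module.support R (R ⧸ I) ↔ I ≤ P.asIdeal := by
  rw [Module.support_eq_zeroLocus, Ideal.annihilator_quotient, PrimeSpectrum.mem_zeroLocus,
    SetLike.coe_subset_coe]

theorem localizedLength_quotient_self (P : PrimeSpectrum R) :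
    localizedLength (R ⧸ P.asIdeal) P = 1 := by
  have hne : localizedLength (R ⧸ P.asIdeal) P ≠ 0 :=
    localizedLength_eq_zero_iff.not_left.mpr (mem_support_quotient_iff.mpr le_rfl)
  refine Module.length_eq_one_iff.mpr (isSimpleModule_iff_toSpanSingleton_surjective.mpr
    ⟨Module.length_pos_iff.mp (pos_iff_ne_zero.mpr hne), fun v hv w ↦ ?_⟩)
  induction v using LocalizedModule.induction_on with | _ a s
  induction w using LocalizedModule.induction_on with | _ b t
  obtain ⟨a, rfl⟩ := Ideal.Quotient.mk_surjective a
  obtain ⟨b, rfl⟩ := Ideal.Quotient.mk_surjective b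
  have ha : a ∈ P.asIdeal.primeCompl := fun haP ↦
    hv (by rw [Ideal.Quotient.eq_zero_iff_mem.mpr haP, LocalizedModule.zero_mk])
  refine ⟨Localization.mk (b * s) (⟨a, ha⟩ * t), ?_⟩
  rw [LinearMap.toSpanSingleton_apply, LocalizedModule.mk_smul_mk, LocalizedModule.mk_eq]
  refine ⟨1, ?_⟩
  simp only [one_smul, Submonoid.smul_def, Submonoid.coe_mul, Algebra.smul_def,
    Ideal.Quotient.algebraMap_eq, map_mul]
  ring

end LocalizedLength

section Support

variable {R M N : Type*} [CommRing R] [AddCommGroup M] [Module R M]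
  [AddCommGroup N] [Module R N] [Module.Finite R M] [Module.Finite R N] {x : R}

theorem isSMulRegular_quotient_of_notMem {I : Ideal R} [hI : I.IsPrime] (hx : x ∉ I) :
    IsSMulRegular (R ⧸ I) x :=
  (isSMulRegular_quotient_iff_mem_of_smul_mem I x).mpr fun _ h ↦
    (hI.mem_or_mem h).resolve_left hx

theorem length_quotSMulTop_ne_zero [Nontrivial M] (hx : x ∈ Ring.jacobson R) :
    Module.length R (QuotSMulTop x M) ≠ 0 := by
  have hx' : x ∈ (Module.annihilator R M).jacobson :=
    Ideal.jacobson_mono bot_le (Ideal.jacobson_bot (R := R) ▸ hx)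
  rw [Ne, Module.length_eq_zero_iff, Submodule.Quotient.subsingleton_iff]
  exact (Submodule.top_ne_pointwise_smul_of_mem_jacobson_annihilator hx').symm

theorem length_quotient_ne_top_iff_isMaximal {I : Ideal R} [hI : I.IsPrime] :
    Module.length R (R ⧸ I) ≠ ⊤ ↔ I.IsMaximal := by
  refine ⟨fun h ↦ ?_, fun _ ↦ ?_⟩
  · have := ((isFiniteLength_iff_isNoetherian_isArtinian).mp (Module.length_ne_top_iff.mp h)).2
    have : IsArtinianRing (R ⧸ I) := isArtinian_of_tower R this
    exact Ideal.Quotient.maximal_of_isField I (IsArtinianRing.isField_of_isDomain _)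
  · have : IsSimpleModule R (R ⧸ I) := isSimpleModule_iff_isCoatom.mpr ‹I.IsMaximal›.out
    rw [Module.length_eq_one]
    exact ENat.one_ne_top

variable [IsNoetherianRing R]

theorem length_ne_top_iff_forall_mem_support_isMaximal :
    Module.length R M ≠ ⊤ ↔ ∀ P ∈ Module.support R M, P.asIdeal.IsMaximal := by
  induction ‹Module.Finite R M› using
    IsNoetherianRing.induction_on_isQuotientEquivQuotientPrime R with
  | subsingleton M => simp [Module.length_eq_zero, Module.support_eq_empty]
  | quotient M p e =>
    rw [e.length_eq, e.support_eq, length_quotient_ne_top_iff_isMaximal]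
    refine ⟨fun hp P hP ↦ ?_, fun h ↦ h p (mem_support_quotient_iff.mpr le_rfl)⟩
    rwa [← hp.eq_of_le P.2.ne_top (mem_support_quotient_iff.mp hP)]
  | exact A B C f g hf hg hfg hA hC =>
    rw [Module.length_eq_add_of_exact f g hf hg hfg, Module.support_of_exact hfg hf hg,
      Ne, ENat.add_eq_top, not_or]
    simp only [Set.mem_union, or_imp, forall_and, ← hA, ← hC]

theorem length_quotSMulTop_ne_top_iff : Module.length R (QuotSMulTop x M) ≠ ⊤ ↔
    ∀ P ∈ Module.support R M, x ∈ P.asIdeal → P.asIdeal.IsMaximal := by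
  simp only [length_ne_top_iff_forall_mem_support_isMaximal, Module.support_quotSMulTop,
    Set.mem_inter_iff, PrimeSpectrum.mem_zeroLocus, Set.singleton_subset_iff, SetLike.mem_coe,
    and_imp]

theorem length_quotSMulTop_ne_top_of_support_subset
    (hM : Module.length R (QuotSMulTop x M) ≠ ⊤) (hNM : Module.support R N ⊆ Module.support R M) :
    Module.length R (QuotSMulTop x N) ≠ ⊤ :=
  length_quotSMulTop_ne_top_iff.mpr fun P hP ↦ length_quotSMulTop_ne_top_iff.mp hM P (hNM hP)

theorem eq_of_le_of_mem_support_of_notMem (hx : x ∈ Ring.jacobson R)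
    (hM : Module.length R (QuotSMulTop x M) ≠ ⊤) {P Q : PrimeSpectrum R}
    (hP : P ∈ Module.support R M) (hPQ : P ≤ Q) (hxQ : x ∉ Q.asIdeal) : P = Q := by
  by_contra hne
  obtain ⟨m, hm, hQm⟩ := Q.asIdeal.exists_le_maximal Q.2.ne_top
  have hxm : x ∈ m := Ring.jacobson_le_of_isMaximal m hx
  have hlt : Q < ⟨m, hm.isPrime⟩ := lt_of_le_of_ne hQm (by rintro rfl; exact hxQ hxm)
  obtain ⟨q, hxq, hPq, hqm⟩ :=
    PrimeSpectrum.exist_mem_one_of_mem_two (hPQ.lt_of_ne hne) hlt hxm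
  have hq : q.asIdeal.IsMaximal :=
    length_quotSMulTop_ne_top_iff.mp hM q (Module.mem_support_mono hPq.le hP) hxq
  exact hqm.ne (PrimeSpectrum.ext (hq.eq_of_le hm.ne_top hqm.le))

theorem finite_setOf_mem_support_notMem (hx : x ∈ Ring.jacobson R)
    (hM : Module.length R (QuotSMulTop x M) ≠ ⊤) :
    {P ∈ Module.support R M | x ∉ P.asIdeal}.Finite := by
  refine (((Module.annihilator R M).finite_minimalPrimes_of_isNoetherianRing R).preimage
    fun _ _ _ _ ↦ PrimeSpectrum.ext).subset fun P ⟨hP, hxP⟩ ↦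
      ⟨⟨P.2, Module.annihilator_le_of_mem_support hP⟩, fun I ⟨hI, hannI⟩ hIP ↦ ?_⟩
  have hI' : ⟨I, hI⟩ ∈ Module.support R M := by
    rwa [Module.support_eq_zeroLocus, PrimeSpectrum.mem_zeroLocus, SetLike.coe_subset_coe]
  exact (congrArg PrimeSpectrum.asIdeal
    (eq_of_le_of_mem_support_of_notMem hx hM hI' hIP hxP)).ge

theorem length_quotSMulTop_quotient_ne_top_of_mem_support {P : PrimeSpectrum R}
    (hM : Module.length R (QuotSMulTop x M) ≠ ⊤) (hP : P ∈ Module.support R M) :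
    Module.length R (QuotSMulTop x (R ⧸ P.asIdeal)) ≠ ⊤ :=
  length_quotSMulTop_ne_top_of_support_subset hM fun _ hQ ↦
    Module.mem_support_mono (mem_support_quotient_iff.mp hQ) hP

end Support

section Herbrand

variable {R M : Type*} [CommRing R] [IsNoetherianRing R] [AddCommGroup M] [Module R M]
  [Module.Finite R M] {x : R} {S : Finset (PrimeSpectrum R)}

theorem length_quotSMulTop_quotient_eq_length_torsionBy_add_sum (hx : x ∈ Ring.jacobson R)
    {p : PrimeSpectrum R} (hp : Module.length R (QuotSMulTop x (R ⧸ p.asIdeal)) ≠ ⊤)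
    (hxS : ∀ P ∈ S, x ∉ P.asIdeal) (hpS : x ∉ p.asIdeal → p ∈ S) :
    Module.length R (QuotSMulTop x (R ⧸ p.asIdeal)) =
      Module.length R (Submodule.torsionBy R (R ⧸ p.asIdeal) x) +
        ∑ P ∈ S, localizedLength (R ⧸ p.asIdeal) P *
          Module.length R (QuotSMulTop x (R ⧸ P.asIdeal)) := by
  by_cases hxp : x ∈ p.asIdeal
  · have hzero : ∀ P ∈ S, localizedLength (R ⧸ p.asIdeal) P = 0 := fun P hP ↦
      localizedLength_eq_zero_iff.mpr fun hpP ↦ hxS P hP (mem_support_quotient_iff.mp hpP hxp)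
    rw [length_quotSMulTop_eq_length_torsionBy_of_mem_annihilator
      (by rwa [Ideal.annihilator_quotient]), Finset.sum_eq_zero, add_zero]
    exact fun P hP ↦ by rw [hzero P hP, zero_mul]
  · have hzero : ∀ P ∈ S, P ≠ p → localizedLength (R ⧸ p.asIdeal) P = 0 := fun P hP hne ↦
      localizedLength_eq_zero_iff.mpr fun hpP ↦ hne (eq_of_le_of_mem_support_of_notMem hx hp
        (mem_support_quotient_iff.mpr le_rfl) (mem_support_quotient_iff.mp hpP) (hxS P hP)).symm
    rw [(length_torsionBy_eq_zero_iff x).mpr (isSMulRegular_quotient_of_notMem hxp), zero_add,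
      Finset.sum_eq_single_of_mem p (hpS hxp), localizedLength_quotient_self, one_mul]
    exact fun P hP hne ↦ by rw [hzero P hP hne, zero_mul]

theorem length_quotSMulTop_eq_length_torsionBy_add_sum (hx : x ∈ Ring.jacobson R)
    (hM : Module.length R (QuotSMulTop x M) ≠ ⊤) (hxS : ∀ P ∈ S, x ∉ P.asIdeal)
    (hMS : ∀ P ∈ Module.support R M, x ∉ P.asIdeal → P ∈ S) :
    Module.length R (QuotSMulTop x M) = Module.length R (Submodule.torsionBy R M x) +
      ∑ P ∈ S, localizedLength M P * Module.length R (QuotSMulTop x (R ⧸ P.asIdeal)) := by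
  induction ‹Module.Finite R M› using
    IsNoetherianRing.induction_on_isQuotientEquivQuotientPrime R with
  | subsingleton M =>
    simp [Module.length_eq_zero, localizedLength]
  | quotient M p e =>
    rw [(QuotSMulTop.congr x e).length_eq] at hM ⊢
    rw [length_quotSMulTop_quotient_eq_length_torsionBy_add_sum hx hM hxS,
      length_torsionBy_congr x e]
    · simp only [localizedLength_congr e]
    · exact hMS p (e.support_eq ▸ mem_support_quotient_iff.mpr le_rfl)
  | exact A B C f g hf hg hfg ihA ihC =>
    have hAB := Module.support_subset_of_injective f hf
    have hCB := Module.support_subset_of_surjective g hg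
    have hAx := length_quotSMulTop_ne_top_of_support_subset hM hAB
    have hCx := length_quotSMulTop_ne_top_of_support_subset hM hCB
    have hA := ihA hAx fun P hP ↦ hMS P (hAB hP)
    have hC := ihC hCx fun P hP ↦ hMS P (hCB hP)
    have htors : Module.length R (Submodule.torsionBy R A x) +
        Module.length R (Submodule.torsionBy R C x) ≠ ⊤ := by
      rw [Ne, ENat.add_eq_top, not_or]
      exact ⟨ne_top_of_le_ne_top hAx (hA ▸ le_self_add), ne_top_of_le_ne_top hCx (hC ▸ le_self_add)⟩
    refine ENat.add_right_injective_of_ne_top htors ?_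
    dsimp only
    rw [length_torsionBy_add_length_quotSMulTop_of_exact x hf hg hfg, hA, hC]
    simp only [localizedLength_eq_add_of_exact hf hg hfg, add_mul, Finset.sum_add_distrib]
    ring

end Herbrand

section Comparison

variable {R M N : Type*} [CommRing R] [IsNoetherianRing R] [AddCommGroup M] [Module R M]
  [AddCommGroup N] [Module R N] [Module.Finite R N] {x : R}

theorem exists_mem_support_le_notMem_of_isSMulRegular (hN : IsSMulRegular N x)
    {P : PrimeSpectrum R} (hP : P ∈ Module.support R N) :
    ∃ Q ∈ Module.support R N, Q ≤ P ∧ x ∉ Q.asIdeal := by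
  obtain ⟨q, hq, hqP⟩ := Ideal.exists_minimalPrimes_le (Module.annihilator_le_of_mem_support hP)
  have hass := Module.associatedPrimes.minimalPrimes_annihilator_subset_associatedPrimes R N hq
  refine ⟨⟨q, hq.1.1⟩, ?_, hqP, fun hxq ↦ ?_⟩
  · rw [Module.support_eq_zeroLocus]
    exact hq.1.2
  · have hx : x ∈ ⋃ p ∈ associatedPrimes R N, (p : Set R) := Set.mem_biUnion hass hxq
    rw [biUnion_associatedPrimes_eq_compl_regular] at hx
    exact hx hN

theorem support_subset_of_localizedLength_le (hN : IsSMulRegular N x)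
    (hle : ∀ P : PrimeSpectrum R, x ∉ P.asIdeal → localizedLength N P ≤ localizedLength M P) :
    Module.support R N ⊆ Module.support R M := by
  intro P hP
  obtain ⟨Q, hQ, hQP, hxQ⟩ := exists_mem_support_le_notMem_of_isSMulRegular hN hP
  refine Module.mem_support_mono hQP (not_imp_comm.mp localizedLength_eq_zero_iff.mpr ?_)
  exact fun hM ↦ localizedLength_eq_zero_iff.mp (nonpos_iff_eq_zero.mp (hM ▸ hle Q hxQ)) hQ

theorem length_comparison_general [Module.Finite R M] (hx : x ∈ Ring.jacobson R)
    (hM : Module.length R (QuotSMulTop x M) ≠ ⊤) (hN : IsSMulRegular N x)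
    (hle : ∀ P : PrimeSpectrum R, x ∉ P.asIdeal → localizedLength N P ≤ localizedLength M P) :
    Module.length R (QuotSMulTop x N) ≤ Module.length R (QuotSMulTop x M) ∧
      (Module.length R (QuotSMulTop x M) = Module.length R (QuotSMulTop x N) ↔
        IsSMulRegular M x ∧
          ∀ P : PrimeSpectrum R, x ∉ P.asIdeal → localizedLength M P = localizedLength N P) := by
  have hNM := support_subset_of_localizedLength_le hN hle
  let S := (finite_setOf_mem_support_notMem hx hM).toFinset
  have hS {P : PrimeSpectrum R} : P ∈ S ↔ P ∈ Module.support R M ∧ x ∉ P.asIdeal :=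
    Set.Finite.mem_toFinset _
  have hxS : ∀ P ∈ S, x ∉ P.asIdeal := fun P hP ↦ (hS.mp hP).2
  have hle' : ∀ P ∈ S, localizedLength N P ≤ localizedLength M P := fun P hP ↦ hle P (hxS P hP)
  have hlenM := length_quotSMulTop_eq_length_torsionBy_add_sum hx hM hxS
    fun P hP hxP ↦ hS.mpr ⟨hP, hxP⟩
  have hlenN := length_quotSMulTop_eq_length_torsionBy_add_sum hx
    (length_quotSMulTop_ne_top_of_support_subset hM hNM) hxS fun P hP hxP ↦ hS.mpr ⟨hNM hP, hxP⟩
  rw [(length_torsionBy_eq_zero_iff x).mpr hN, zero_add] at hlenN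
  have hforall : (∀ P ∈ S, localizedLength N P = localizedLength M P) ↔
      ∀ P : PrimeSpectrum R, x ∉ P.asIdeal → localizedLength M P = localizedLength N P := by
    refine ⟨fun h P hxP ↦ ?_, fun h P hP ↦ (h P (hxS P hP)).symm⟩
    by_cases hP : P ∈ Module.support R M
    · exact (h P (hS.mpr ⟨hP, hxP⟩)).symm
    · rw [localizedLength_eq_zero_iff.mpr hP, localizedLength_eq_zero_iff.mpr (mt (@hNM P) hP)]
  rw [eq_comm, ← hforall, ← length_torsionBy_eq_zero_iff, hlenN]
  rw [hlenM] at hM ⊢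
  exact ⟨(Finset.sum_le_sum fun P hP ↦ mul_le_mul_left (hle' P hP) _).trans le_add_self,
    enat_sum_mul_eq_add_sum_mul_iff hle' (fun P _ ↦ length_quotSMulTop_ne_zero hx)
      (fun P hP ↦ length_quotSMulTop_quotient_ne_top_of_mem_support (hlenM ▸ hM) (hS.mp hP).1) hM⟩

end Comparison

section DimensionOne

open scoped nonZeroDivisors

theorem mlen_quotient_span_singleton_smul_top (R M : Type) [CommRing R] [AddCommGroup M]
    [Module R M] (x : R) :
    mlen R (M ⧸ (Ideal.span {x} : Ideal R) • (⊤ : Submodule R M)) =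
      Module.length R (QuotSMulTop x M) := by
  rw [Submodule.ideal_span_singleton_smul]
  exact (Module.coe_length _ _).symm

theorem locLen_eq_localizedLength (R M : Type) [CommRing R] [AddCommGroup M] [Module R M]
    (P : PrimeSpectrum R) : locLen R M P = localizedLength M P :=
  (Module.coe_length _ _).symm

variable {R M : Type*} [CommRing R] [AddCommGroup M] [Module R M] {x : R}

theorem mem_minimalPrimes_iff_notMem (hdim : Ring.KrullDimLE 1 R) (hx : x ∈ Ring.jacobson R)
    (hxR : x ∈ R⁰) {P : Ideal R} [hP : P.IsPrime] : P ∈ minimalPrimes R ↔ x ∉ P := by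
  refine ⟨fun h hxP ↦ notMem_nonZeroDivisors_of_mem_mem_minimalPrimes hxP h hxR, fun hxP ↦ ?_⟩
  exact (Ring.krullDimLE_one_iff.mp hdim P hP).resolve_right fun hmax ↦
    hxP (Ring.jacobson_le_of_isMaximal P hx)

theorem ringKrullDim_quotient_eq_one (hdim : Ring.KrullDimLE 1 R) (hx : x ∈ Ring.jacobson R)
    {P : Ideal R} [P.IsPrime] (hxP : x ∉ P) : ringKrullDim (R ⧸ P) = 1 := by
  refine le_antisymm ((ringKrullDim_quotient_le P).trans (Ring.krullDimLE_iff.mp hdim))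
    (Order.succ_le_of_lt (a := (0 : WithBot ℕ∞)) (lt_of_not_ge fun h ↦ ?_))
  have : Ring.KrullDimLE 0 (R ⧸ P) := Ring.krullDimLE_iff.mpr h
  have hmax := Ideal.Quotient.maximal_of_isField P Ring.KrullDimLE.isField_of_isDomain
  exact hxP (Ring.jacobson_le_of_isMaximal P hx)

theorem mem_minimalPrimes_and_ringKrullDim_quotient_eq_one_iff (hdim : Ring.KrullDimLE 1 R)
    (hx : x ∈ Ring.jacobson R) (hxR : x ∈ R⁰) {P : Ideal R} [P.IsPrime] :
    P ∈ minimalPrimes R ∧ ringKrullDim (R ⧸ P) = 1 ↔ x ∉ P := by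
  rw [mem_minimalPrimes_iff_notMem hdim hx hxR]
  exact and_iff_left_of_imp (ringKrullDim_quotient_eq_one hdim hx)

theorem length_quotSMulTop_ne_top_of_krullDimLE_one [IsNoetherianRing R] [Module.Finite R M]
    (hdim : Ring.KrullDimLE 1 R) (hxR : x ∈ R⁰) :
    Module.length R (QuotSMulTop x M) ≠ ⊤ :=
  length_quotSMulTop_ne_top_iff.mpr fun P _ hxP ↦
    (Ring.krullDimLE_one_iff.mp hdim P.asIdeal P.2).resolve_left fun hmin ↦
      notMem_nonZeroDivisors_of_mem_mem_minimalPrimes hxP hmin hxR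

theorem isSMulRegular_iff_associatedPrimes_subset_minimalPrimes [IsNoetherianRing R]
    (hdim : Ring.KrullDimLE 1 R) (hx : x ∈ Ring.jacobson R) (hxR : x ∈ R⁰) :
    IsSMulRegular M x ↔ ∀ P ∈ associatedPrimes R M, P ∈ minimalPrimes R := by
  have hunion := Set.ext_iff.mp (biUnion_associatedPrimes_eq_compl_regular R M) x
  simp only [Set.mem_iUnion, Set.mem_compl_iff, SetLike.mem_coe, exists_prop] at hunion
  rw [← not_iff_not, ← show _ ↔ ¬ IsSMulRegular M x from hunion]
  push Not
  refine exists_congr fun P ↦ and_congr_right fun hP ↦ ?_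
  have := hP.isPrime
  rw [mem_minimalPrimes_iff_notMem hdim hx hxR, not_not]

end DimensionOne

/-- Length comparison under dimension reduction: if `M, N` are finite modules of dimension 1
over a 1-dimensional Noetherian local ring, `N` is torsion free (CM), and
`length_{R_P}(M_P) ≥ length_{R_P}(N_P)` at all 1-dimensional primes, then for a
non-zerodivisor `x ∈ m` one has `length(M/xM) ≥ length(N/xN)`, with equality iff `M` is
torsion free and the localized lengths agree. -/
theorem length_comparison (R : Type) [CommRing R] [IsNoetherianRing R] [IsLocalRing R]
    (hdim : ringKrullDim R = 1)
    (M N : Type) [AddCommGroup M] [Module R M] [AddCommGroup N] [Module R N]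
    [Module.Finite R M] [Module.Finite R N]
    (hMdim : ringKrullDim (R ⧸ Module.annihilator R M) = 1)
    (hNdim : ringKrullDim (R ⧸ Module.annihilator R N) = 1)
    (hNtf : ∀ P ∈ associatedPrimes R N, P ∈ minimalPrimes R)
    (hlen : ∀ P : PrimeSpectrum R, P.asIdeal ∈ minimalPrimes R →
      ringKrullDim (R ⧸ P.asIdeal) = 1 → locLen R N P ≤ locLen R M P)
    (x : R) (hx : x ∈ maximalIdeal R)
    (hxR : ∀ a : R, x * a = 0 → a = 0) (hxN : ∀ v : N, x • v = 0 → v = 0) :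
    mlen R (N ⧸ ((Ideal.span {x} : Ideal R) • (⊤ : Submodule R N))) ≤
      mlen R (M ⧸ ((Ideal.span {x} : Ideal R) • (⊤ : Submodule R M))) ∧
    (mlen R (M ⧸ ((Ideal.span {x} : Ideal R) • (⊤ : Submodule R M))) =
        mlen R (N ⧸ ((Ideal.span {x} : Ideal R) • (⊤ : Submodule R N))) ↔
      ((∀ P ∈ associatedPrimes R M, P ∈ minimalPrimes R) ∧
        ∀ P : PrimeSpectrum R, P.asIdeal ∈ minimalPrimes R →
          ringKrullDim (R ⧸ P.asIdeal) = 1 → locLen R M P = locLen R N P)) := by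
  have hdim' : Ring.KrullDimLE 1 R := Ring.krullDimLE_iff.mpr hdim.le
  have hxJ : x ∈ Ring.jacobson R := (ringJacobson_eq_maximalIdeal R).symm ▸ hx
  have hxR' : x ∈ nonZeroDivisors R := mem_nonZeroDivisors_iff_right.mpr fun a ha ↦
    hxR a (by rwa [mul_comm])
  simp only [← and_imp, mem_minimalPrimes_and_ringKrullDim_quotient_eq_one_iff hdim' hxJ hxR',
    ← isSMulRegular_iff_associatedPrimes_subset_minimalPrimes hdim' hxJ hxR',
    mlen_quotient_span_singleton_smul_top, locLen_eq_localizedLength, WithBot.coe_le_coe,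
    WithBot.coe_inj] at hlen ⊢
  exact length_comparison_general hxJ
    (length_quotSMulTop_ne_top_of_krullDimLE_one hdim' hxR')
    (isSMulRegular_iff_right_eq_zero_of_smul.mpr hxN) hlen
end

section
/- Let (R, m) be a reduced 1-dimensional Noetherian local ring with finite normalization R̄ and conductor c, and assume R is Gorenstein. Then length_R(R̄/R) = length_R(R/c); equivalently length_R(R̄/c) = 2·length_R(R/c) (the 'n = 2δ' theorem). -/
open CategoryTheory IsLocalRing

set_option synthInstance.maxHeartbeats 1000000
set_option maxHeartbeats 1600000

/-!
Put `E = B / R`, where `B` is the normalization. Nothing nonzero in `B` is killed by the maximal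
ideal, so the connecting map `Hom(k, E) → Ext¹(k, R) ≅ k` is injective and `Hom(k, E)` has length
at most one. By dévissage `length Hom(M, E) ≤ length M` for every `M`. The multiplication pairing
`(R / ann E) × E → E` embeds `E` in `Hom(R / ann E, E)` and `R / ann E` in `Hom(E, E)`, so `E` and
`R / ann E` have the same length; and `ann E` is the conductor `c`. Since `c` is also an ideal of
`B`, the sequence `0 → R / c → B / cB → B / R → 0` is exact, and `B / cB` has twice that length.
-/

universe v u w

section Length

variable {R : Type*} [CommRing R]

lemma length_quotient_map_eq_add {M N : Type*} [AddCommGroup M] [Module R M]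
    [AddCommGroup N] [Module R N] {f : N →ₗ[R] M} (hf : Function.Injective f)
    (p : Submodule R N) :
    Module.length R (M ⧸ p.map f) =
      Module.length R (N ⧸ p) + Module.length R (M ⧸ LinearMap.range f) := by
  have hp : p.map f ≤ LinearMap.range f := LinearMap.map_le_range
  refine Module.length_eq_add_of_exact (p.mapQ (p.map f) f (Submodule.le_comap_map f p))
    (Submodule.factor hp) ?_ (Submodule.factor_surjective hp) ?_
  · rw [← LinearMap.ker_eq_bot, Submodule.ker_mapQ, Submodule.comap_map_eq_of_injective hf,
      Submodule.mkQ_map_self]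
  · rw [LinearMap.exact_iff, Submodule.range_mapQ, Submodule.factor, Submodule.ker_mapQ]
    rfl

lemma length_linearMap_le_add (E : Type*) [AddCommGroup E] [Module R E] {M : Type*}
    [AddCommGroup M] [Module R M] (N : Submodule R M) :
    Module.length R (M →ₗ[R] E) ≤
      Module.length R (N →ₗ[R] E) + Module.length R ((M ⧸ N) →ₗ[R] E) := by
  let res : (M →ₗ[R] E) →ₗ[R] (N →ₗ[R] E) := N.subtype.lcomp R E
  let infl : ((M ⧸ N) →ₗ[R] E) →ₗ[R] (M →ₗ[R] E) := N.mkQ.lcomp R E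
  have hinfl : Function.Injective infl :=
    LinearMap.lcomp_injective_of_surjective N.mkQ N.mkQ_surjective
  have hexact : Function.Exact infl res.rangeRestrict := by
    rw [LinearMap.exact_iff, LinearMap.ker_rangeRestrict, ← LinearMap.exact_iff]
    exact LinearMap.exact_lcomp_of_exact_of_surjective E (LinearMap.exact_subtype_mkQ N)
      N.mkQ_surjective
  calc Module.length R (M →ₗ[R] E)
    _ = Module.length R ((M ⧸ N) →ₗ[R] E) + Module.length R (LinearMap.range res) :=
        Module.length_eq_add_of_exact infl res.rangeRestrict hinfl
          res.surjective_rangeRestrict hexact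
    _ ≤ Module.length R ((M ⧸ N) →ₗ[R] E) + Module.length R (N →ₗ[R] E) := by
        gcongr
        exact Module.length_le_of_injective _ (Submodule.injective_subtype _)
    _ = Module.length R (N →ₗ[R] E) + Module.length R ((M ⧸ N) →ₗ[R] E) := add_comm _ _

variable {E : Type*} [AddCommGroup E] [Module R E]
  (hE : ∀ (I : Ideal R) [I.IsMaximal], Module.length R ((R ⧸ I) →ₗ[R] E) ≤ 1)
include hE

lemma length_linearMap_le_one_of_isSimpleModule (S : Type*) [AddCommGroup S] [Module R S]
    [hS : IsSimpleModule R S] : Module.length R (S →ₗ[R] E) ≤ 1 := by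
  obtain ⟨I, _, ⟨e⟩⟩ := isSimpleModule_iff_quot_maximal.mp hS
  exact (e.congrLeft E R).length_eq.trans_le (hE I)

lemma length_linearMap_le_length (M : Type*) [AddCommGroup M] [Module R M] :
    Module.length R (M →ₗ[R] E) ≤ Module.length R M := by
  by_cases hM : IsFiniteLength R M
  · induction hM with
    | of_subsingleton => rw [Module.length_eq_zero]; exact bot_le
    | @of_simple_quotient M _ _ N _ _ ih =>
      calc Module.length R (M →ₗ[R] E)
        _ ≤ Module.length R (N →ₗ[R] E) + Module.length R ((M ⧸ N) →ₗ[R] E) :=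
            length_linearMap_le_add E N
        _ ≤ Module.length R N + 1 :=
            add_le_add ih (length_linearMap_le_one_of_isSimpleModule hE _)
        _ = Module.length R N + Module.length R (M ⧸ N) := by
            rw [Module.length_eq_one R (M ⧸ N)]
        _ = Module.length R M :=
            (Module.length_eq_add_of_exact N.subtype N.mkQ N.injective_subtype
              N.mkQ_surjective (LinearMap.exact_subtype_mkQ N)).symm
  · rw [← Module.length_ne_top_iff, not_not] at hM
    exact hM ▸ le_top

theorem length_eq_length_quotient_annihilator :
    Module.length R E = Module.length R (R ⧸ Module.annihilator R E) := by
  let act : (R ⧸ Module.annihilator R E) →ₗ[R] E →ₗ[R] E :=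
    (Module.annihilator R E).liftQ (LinearMap.lsmul R E)
      fun r hr => LinearMap.ext fun e => Module.mem_annihilator.mp hr e
  have act_mk (r : R) (e : E) : act (Submodule.Quotient.mk r) e = r • e := rfl
  have act_injective : Function.Injective act := by
    rw [← LinearMap.ker_eq_bot]
    refine Submodule.ker_liftQ_eq_bot _ _ _ fun r hr => Module.mem_annihilator.mpr fun e => ?_
    exact congr($hr e)
  have flip_injective : Function.Injective act.flip := fun e e' h => by
    simpa only [LinearMap.flip_apply, act_mk, one_smul] using congr($h (Submodule.Quotient.mk 1))
  exact le_antisymm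
    ((Module.length_le_of_injective _ flip_injective).trans (length_linearMap_le_length hE _))
    ((Module.length_le_of_injective _ act_injective).trans (length_linearMap_le_length hE _))

end Length

lemma subsingleton_linearMap_of_injective {R P M N : Type*} [Semiring R] [AddCommMonoid P]
    [Module R P] [AddCommMonoid M] [Module R M] [AddCommMonoid N] [Module R N] {f : M →ₗ[R] N}
    (hf : Function.Injective f) [Subsingleton (P →ₗ[R] N)] : Subsingleton (P →ₗ[R] M) :=
  ⟨fun _ _ => (LinearMap.cancel_left hf).mp (Subsingleton.elim _ _)⟩

section LocalRing

variable {R : Type*} [CommRing R] [IsLocalRing R]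

lemma length_residueField : Module.length R (ResidueField R) = 1 := by
  have : IsSimpleModule R (ResidueField R) :=
    isSimpleModule_iff_quot_maximal.mpr ⟨maximalIdeal R, inferInstance, ⟨.refl R _⟩⟩
  exact Module.length_eq_one R _

lemma annihilator_maximalIdeal_eq_bot [IsReduced R] (hR : ¬IsField R) :
    (maximalIdeal R).annihilator = ⊥ := by
  refine (Submodule.eq_bot_iff _).mpr fun a ha => ?_
  have mul_eq_zero_of_mem (y : R) (hy : y ∈ maximalIdeal R) : a * y = 0 :=
    Submodule.mem_annihilator.mp ha y hy
  have a_mem : a ∈ maximalIdeal R := fun hu => hR <| isField_iff_maximalIdeal_eq.mpr <|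
    (Submodule.eq_bot_iff _).mpr fun y hy => hu.mul_right_eq_zero.mp (mul_eq_zero_of_mem y hy)
  exact eq_zero_of_pow_eq_zero ((sq a).trans (mul_eq_zero_of_mem a a_mem))

lemma subsingleton_residueField_linearMap (hR : (maximalIdeal R).annihilator = ⊥)
    (Q : Type*) [CommRing Q] [Algebra R Q] [IsFractionRing R Q] :
    Subsingleton (ResidueField R →ₗ[R] Q) := by
  refine subsingleton_of_forall_eq 0 fun f => LinearMap.ext fun x => ?_
  obtain ⟨⟨a, s⟩, hs : f x * algebraMap R Q s = algebraMap R Q a⟩ :=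
    IsLocalization.surj (nonZeroDivisors R) (f x)
  have a_mem : a ∈ (maximalIdeal R).annihilator := by
    refine Submodule.mem_annihilator.mpr fun y hy => IsFractionRing.injective R Q ?_
    have smul_x : y • x = 0 := by
      rw [Algebra.smul_def]
      exact mul_eq_zero_of_left ((residue_eq_zero_iff y).mpr hy) x
    have smul_f : y • f x = 0 := by rw [← map_smul, smul_x, map_zero]
    rw [smul_eq_mul, mul_comm, map_mul, ← hs, ← mul_assoc, ← Algebra.smul_def, smul_f, zero_mul,
      map_zero]
  rw [hR, Submodule.mem_bot] at a_mem
  rw [a_mem, map_zero] at hs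
  exact (IsLocalization.map_units Q s).mul_left_eq_zero.mp hs

end LocalRing

section Conductor

variable (R B : Type*) [CommRing R] [CommRing B] [Algebra R B]

/-- The conductor of an `R`-algebra `B`: the largest ideal of `R` carrying `B` into the image
of `R`. Mathlib's `conductor` is the case `R[x] ⊆ B`, as an ideal of `R[x]`. -/
def algebraConductor : Ideal R :=
  Module.annihilator R (B ⧸ LinearMap.range (Algebra.linearMap R B))

variable {R B}

lemma mem_algebraConductor {r : R} :
    r ∈ algebraConductor R B ↔ ∀ x : B, r • x ∈ LinearMap.range (Algebra.linearMap R B) := by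
  simp only [algebraConductor, Submodule.annihilator_quotient, Submodule.mem_colon, Set.mem_univ,
    true_imp_iff]

lemma algebraConductor_smul_top :
    algebraConductor R B • (⊤ : Submodule R B) =
      Submodule.map (Algebra.linearMap R B) (algebraConductor R B) := by
  refine le_antisymm (Submodule.smul_le.mpr fun r hr b _ => ?_)
    (Submodule.map_le_iff_le_comap.mpr fun r hr => ?_)
  · obtain ⟨s, hs : algebraMap R B s = r • b⟩ := mem_algebraConductor.mp hr b
    refine ⟨s, mem_algebraConductor.mpr fun x => ?_, hs⟩
    rw [Algebra.smul_def, hs, smul_mul_assoc]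
    exact mem_algebraConductor.mp hr (b * x)
  · rw [Submodule.mem_comap, Algebra.linearMap_apply, Algebra.algebraMap_eq_smul_one]
    exact Submodule.smul_mem_smul hr Submodule.mem_top

end Conductor

section Ext

open Limits

variable {R : Type w} [CommRing R] {C : Type u} [Category.{v} C] [Abelian C] [Linear R C]

lemma shortExact_map_linearCoyoneda {S : ShortComplex C} (hS : S.ShortExact) (P : C)
    [Projective P] : (S.map ((linearCoyoneda R C).obj (Opposite.op P))).ShortExact := by
  have := hS.mono_f
  have := hS.epi_g
  refine ShortComplex.ShortExact.mk' ?_ ?_ ?_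
  · rw [ShortComplex.moduleCat_exact_iff]
    intro (x : P ⟶ S.X₂) (hx : x ≫ S.g = 0)
    exact ⟨hS.exact.lift x hx, hS.exact.lift_f x hx⟩
  · rw [ModuleCat.mono_iff_injective]
    intro (x : P ⟶ S.X₁) (y : P ⟶ S.X₁) (h : x ≫ S.f = y ≫ S.f)
    exact (cancel_mono S.f).mp h
  · rw [ModuleCat.epi_iff_surjective]
    intro (x : P ⟶ S.X₃)
    exact ⟨Projective.factorThru x S.g, Projective.factorThru_comp x S.g⟩

variable (R) in
/-- The functor `Y ↦ Hom(P, Y)` for a chain complex `P`, whose value at `Y` is Mathlib's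
`P.linearYonedaObj R Y`. For `P` degreewise projective it preserves short exact sequences, whence
the long exact sequence of `Ext` in the second variable. -/
noncomputable def linearYonedaFunctor (P : ChainComplex C ℕ) :
    C ⥤ CochainComplex (ModuleCat R) ℕ where
  obj Y := P.linearYonedaObj R Y
  map f :=
    { f i := ((linearYoneda R C).map f).app (Opposite.op (P.X i))
      comm' i j _ := ((linearYoneda R C).map f).naturality (P.d j i).op |>.symm }
  map_id Y := by
    ext i : 1
    exact congr(($((linearYoneda R C).map_id Y)).app (Opposite.op (P.X i)))
  map_comp f g := by
    ext i : 1
    exact congr(($((linearYoneda R C).map_comp f g)).app (Opposite.op (P.X i)))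

instance (P : ChainComplex C ℕ) : (linearYonedaFunctor R P).PreservesZeroMorphisms where
  map_zero X Y := by
    ext i : 1
    exact congr(($((linearYoneda R C).map_zero X Y)).app (Opposite.op (P.X i)))

lemma shortExact_map_linearYonedaFunctor {S : ShortComplex C} (hS : S.ShortExact)
    (P : ChainComplex C ℕ) [∀ i, Projective (P.X i)] :
    (S.map (linearYonedaFunctor R P)).ShortExact :=
  HomologicalComplex.shortExact_of_degreewise_shortExact _ fun i =>
    shortExact_map_linearCoyoneda hS (P.X i)

instance (Y : C) : PreservesFiniteLimits ((linearYoneda R C).obj Y) := by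
  have : PreservesFiniteLimits ((linearYoneda R C).obj Y ⋙ forget (ModuleCat R)) :=
    inferInstanceAs (PreservesFiniteLimits (yoneda.obj Y))
  exact preservesFiniteLimits_of_reflects_of_preserves _ (forget (ModuleCat R))

variable [EnoughProjectives C]

variable (R) in
/-- `Ext⁰(X, Y) ≅ Hom(X, Y)`, for `Ext` defined by deriving the first variable. -/
noncomputable def extZeroIso (X Y : C) :
    ((Ext R C 0).obj (Opposite.op X)).obj Y ≅ ModuleCat.of R (X ⟶ Y) :=
  have := preservesFiniteColimits_rightOp ((linearYoneda R C).obj Y)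
  (((linearYoneda R C).obj Y).rightOp.leftDerivedZeroIsoSelf.app X).unop.symm

theorem exists_mono_ext {S : ShortComplex C} (hS : S.ShortExact) (X : C) (n : ℕ)
    (h : IsZero (((Ext R C n).obj (Opposite.op X)).obj S.X₂)) :
    ∃ δ : ((Ext R C n).obj (Opposite.op X)).obj S.X₃ ⟶
      ((Ext R C (n + 1)).obj (Opposite.op X)).obj S.X₁, Mono δ := by
  let P := ProjectiveResolution.of X
  have hPS := shortExact_map_linearYonedaFunctor (R := R) hS P.complex
  let δ : (P.complex.linearYonedaObj R S.X₃).homology n ⟶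
      (P.complex.linearYonedaObj R S.X₁).homology (n + 1) := hPS.δ n (n + 1) rfl
  have : Mono δ := hPS.mono_δ n (n + 1) rfl (h.of_iso (P.isoExt n S.X₂).symm)
  exact ⟨(P.isoExt n S.X₃).hom ≫ δ ≫ (P.isoExt (n + 1) S.X₁).inv, inferInstance⟩

end Ext

section ModuleExt

variable {R : Type u} [CommRing R]

/-- `Ext⁰(M, N) ≅ Hom(M, N)` for modules, with `Hom` the unbundled module of linear maps. -/
noncomputable def extZeroLinearEquiv (M N : Type u) [AddCommGroup M] [Module R M]
    [AddCommGroup N] [Module R N] :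
    ((Ext R (ModuleCat R) 0).obj (Opposite.op (ModuleCat.of R M))).obj (ModuleCat.of R N) ≃ₗ[R]
      (M →ₗ[R] N) :=
  (extZeroIso R (ModuleCat.of R M) (ModuleCat.of R N)).toLinearEquiv ≪≫ₗ ModuleCat.homLinearEquiv

lemma length_linearMap_quotient_le_length_ext_one (k : Type u) {A B : Type u}
    [AddCommGroup k] [Module R k] [AddCommGroup A] [Module R A] [AddCommGroup B] [Module R B]
    {f : A →ₗ[R] B} (hf : Function.Injective f) [Subsingleton (k →ₗ[R] B)] :
    Module.length R (k →ₗ[R] B ⧸ LinearMap.range f) ≤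
      Module.length R (((Ext R (ModuleCat R) 1).obj (Opposite.op (ModuleCat.of R k))).obj
        (ModuleCat.of R A)) := by
  let S : ShortComplex (ModuleCat R) := .mk (ModuleCat.ofHom f) (ModuleCat.ofHom f.range.mkQ)
    (by ext; simp)
  have hS : S.ShortExact := ModuleCat.shortComplex_shortExact S
    (LinearMap.exact_map_mkQ_range f) hf (Submodule.mkQ_surjective _)
  have := (extZeroLinearEquiv (R := R) k B).injective.subsingleton
  obtain ⟨δ, hδ⟩ := exists_mono_ext (R := R) hS (ModuleCat.of R k) 0
    (ModuleCat.isZero_of_subsingleton _)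
  exact (extZeroLinearEquiv k (B ⧸ LinearMap.range f)).symm.length_eq.trans_le
    (Module.length_le_of_injective δ.hom ((ModuleCat.mono_iff_injective δ).mp hδ))

end ModuleExt

theorem n_eq_two_delta_general (R B : Type u) [CommRing R] [IsLocalRing R] [CommRing B]
    [Algebra R B] [FaithfulSMul R B] [Subsingleton (ResidueField R →ₗ[R] B)]
    (hExt : Module.length R (((Ext R (ModuleCat R) 1).obj
      (Opposite.op (ModuleCat.of R (ResidueField R)))).obj (ModuleCat.of R R)) ≤ 1) :
    Module.length R (B ⧸ LinearMap.range (Algebra.linearMap R B)) =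
        Module.length R (R ⧸ algebraConductor R B) ∧
      Module.length R (B ⧸ (algebraConductor R B • (⊤ : Submodule R B))) =
        Module.length R (R ⧸ algebraConductor R B) +
          Module.length R (R ⧸ algebraConductor R B) := by
  have hinj : Function.Injective (Algebra.linearMap R B) := FaithfulSMul.algebraMap_injective R B
  have length_linearMap_le_one (I : Ideal R) [hI : I.IsMaximal] :
      Module.length R ((R ⧸ I) →ₗ[R] B ⧸ LinearMap.range (Algebra.linearMap R B)) ≤ 1 := by
    obtain rfl : I = maximalIdeal R := eq_maximalIdeal hI
    exact (length_linearMap_quotient_le_length_ext_one (ResidueField R) hinj).trans hExt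
  have length_eq : Module.length R (B ⧸ LinearMap.range (Algebra.linearMap R B)) =
      Module.length R (R ⧸ algebraConductor R B) :=
    length_eq_length_quotient_annihilator length_linearMap_le_one
  refine ⟨length_eq, ?_⟩
  rw [algebraConductor_smul_top, length_quotient_map_eq_add hinj, length_eq]

/-- **The `n = 2δ` theorem.** Let `R` be a reduced 1-dimensional Noetherian local ring with
finite normalization `R̄` and conductor `c`, and assume `R` is Gorenstein (i.e. `R` is its own
dualizing module: `Ext^i_R(k, R) = δ_{i,1}·k`). Then `length(R̄/R) = length(R/c)`;
equivalently `length(R̄/cR̄) = 2·length(R/c)`. -/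
theorem n_eq_two_delta (R : Type) [CommRing R] [IsNoetherianRing R] [IsLocalRing R]
    [IsReduced R] (hdim : ringKrullDim R = 1)
    (hfin : Module.Finite R (integralClosure R (FractionRing R)))
    (hGor1 : ∀ i : ℕ, i ≠ 1 → Subsingleton (extM R (ResidueField R) R i))
    (hGor2 : Nonempty ((extM R (ResidueField R) R 1) ≃ₗ[R] ResidueField R))
    (c : Ideal R)
    (hc : ∀ r : R, r ∈ c ↔ ∀ x : (integralClosure R (FractionRing R)),
      r • x ∈ LinearMap.range (Algebra.linearMap R (integralClosure R (FractionRing R)))) :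
    mlen R ((integralClosure R (FractionRing R)) ⧸
        LinearMap.range (Algebra.linearMap R (integralClosure R (FractionRing R)))) =
      mlen R (R ⧸ c) ∧
    mlen R ((integralClosure R (FractionRing R)) ⧸
        (c • (⊤ : Submodule R (integralClosure R (FractionRing R))))) =
      mlen R (R ⧸ c) + mlen R (R ⧸ c) := by
  have hR : ¬IsField R := fun h =>
    zero_ne_one ((ringKrullDim_eq_zero_of_isField h).symm.trans hdim)
  have := subsingleton_residueField_linearMap (annihilator_maximalIdeal_eq_bot hR) (FractionRing R)
  have : Subsingleton (ResidueField R →ₗ[R] integralClosure R (FractionRing R)) :=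
    subsingleton_linearMap_of_injective
      (f := (integralClosure R (FractionRing R)).val.toLinearMap) Subtype.val_injective
  have : FaithfulSMul R (integralClosure R (FractionRing R)) :=
    FaithfulSMul.tower_bot R (integralClosure R (FractionRing R)) (FractionRing R)
  obtain rfl : c = algebraConductor R (integralClosure R (FractionRing R)) :=
    Ideal.ext fun r => (hc r).trans mem_algebraConductor.symm
  simpa only [mlen, ← Module.coe_length, ← WithBot.coe_add, WithBot.coe_inj] using
    n_eq_two_delta_general R (integralClosure R (FractionRing R))
      (hGor2.some.length_eq.trans length_residueField).le
end

section
/- Let (x, X) be a local Cohen–Macaulay scheme of dimension n ≥ 3 with dualizing module ω, and Ω a finite torsion-free module such that for every torsion-free maximal Cohen–Macaulay module M, the dual Hom(M, Ω) is also torsion free and maximal Cohen–Macaulay. Then Ext^j(k, Ω) = 0 for all j ≠ n, i.e., Ω is a direct sum of copies of ω. -/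
open CategoryTheory IsLocalRing

/-!
Over a Cohen–Macaulay ring of dimension `n`, a syzygy of `k` of order at least `n` is maximal
Cohen–Macaulay. Let `M` be the `m`-th syzygy of `k`, `m ≥ n`, and `0 → K → F → M → 0` exact with `F`
free. Then `K`, `F` and `M` are maximal Cohen–Macaulay, hence torsion free, so in
`0 → Hom(M, Ω) → Hom(F, Ω) → Hom(K, Ω) → Ext¹(M, Ω) → 0` the first three modules have depth at least
`n ≥ 3`, and therefore `Ext¹(M, Ω) ≅ Ext^{m+1}(k, Ω)` has positive depth. Being killed by the
maximal ideal, it is zero. In degrees below `n` the vanishing is the depth of `Hom(R, Ω) = Ω`.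
-/

section ExtComparison

universe w

variable {A : Type*} [Ring A] {C : Type*} [Category* C] [Abelian C] [Linear A C] {X : C}

theorem exactAt_linearYonedaObj_iff (K : ChainComplex C ℕ) (Y : C) (n : ℕ) :
    (K.linearYonedaObj A Y).ExactAt n ↔
      ∀ f : K.X n ⟶ Y, K.d (n + 1) n ≫ f = 0 →
        ∃ g : K.X ((ComplexShape.up ℕ).prev n) ⟶ Y,
          K.d n ((ComplexShape.up ℕ).prev n) ≫ g = f := by
  rw [HomologicalComplex.exactAt_iff' _ _ n (n + 1) rfl (by simp),
    ShortComplex.moduleCat_exact_iff]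
  rfl

theorem subsingleton_derivedExt_iff_exactAt [EnoughProjectives C] (P : ProjectiveResolution X)
    (Y : C) (n : ℕ) :
    Subsingleton (((Ext A C n).obj (Opposite.op X)).obj Y) ↔
      (P.complex.linearYonedaObj A Y).ExactAt n := by
  rw [← ModuleCat.isZero_iff_subsingleton, (P.isoExt n Y).isZero_iff,
    HomologicalComplex.exactAt_iff_isZero_homology]

theorem subsingleton_abelianExt_zero_iff_exactAt [HasExt.{w} C] (P : ProjectiveResolution X)
    (Y : C) :
    Subsingleton (Abelian.Ext X Y 0) ↔ (P.complex.linearYonedaObj A Y).ExactAt 0 := by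
  have boundary_zero : P.complex.d 0 ((ComplexShape.up ℕ).prev 0) = 0 :=
    P.complex.shape _ _ (by simp)
  rw [exactAt_linearYonedaObj_iff, boundary_zero]
  simp only [Limits.zero_comp, exists_const_iff]
  constructor
  · intro _ f hf
    have : Subsingleton (X ⟶ Y) := Abelian.Ext.addEquiv₀.symm.toEquiv.subsingleton
    have desc_eq_zero : P.exact₀.desc f hf = 0 := Subsingleton.elim (α := X ⟶ Y) _ _
    refine ⟨⟨0⟩, ?_⟩
    rw [← P.exact₀.g_desc f hf, desc_eq_zero]
    exact Limits.comp_zero.symm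
  · intro h
    refine subsingleton_of_forall_eq 0 fun x => ?_
    obtain ⟨f, hf, rfl⟩ := P.extMk_surjective x 1 rfl
    obtain ⟨-, rfl⟩ := h f hf
    simp

theorem subsingleton_abelianExt_succ_iff_exactAt [HasExt.{w} C] (P : ProjectiveResolution X)
    (Y : C) (n : ℕ) :
    Subsingleton (Abelian.Ext X Y (n + 1)) ↔
      (P.complex.linearYonedaObj A Y).ExactAt (n + 1) := by
  rw [exactAt_linearYonedaObj_iff, show (ComplexShape.up ℕ).prev (n + 1) = n by simp]
  constructor
  · intro _ f hf
    rw [← P.extMk_eq_zero_iff f _ rfl hf n rfl]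
    exact Subsingleton.elim _ _
  · intro h
    refine subsingleton_of_forall_eq 0 fun x => ?_
    obtain ⟨f, hf, rfl⟩ := P.extMk_surjective x (n + 1 + 1) rfl
    exact (P.extMk_eq_zero_iff f _ rfl hf n rfl).2 (h f hf)

theorem subsingleton_derivedExt_iff_subsingleton_abelianExt [EnoughProjectives C] [HasExt.{w} C]
    (X Y : C) (n : ℕ) :
    Subsingleton (((Ext A C n).obj (Opposite.op X)).obj Y) ↔
      Subsingleton (Abelian.Ext X Y n) := by
  rw [subsingleton_derivedExt_iff_exactAt (projectiveResolution X)]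
  cases n with
  | zero => exact (subsingleton_abelianExt_zero_iff_exactAt _ Y).symm
  | succ n => exact (subsingleton_abelianExt_succ_iff_exactAt _ Y n).symm

end ExtComparison

section AssociatedPrimes

open scoped Pointwise

variable {R M : Type*} [CommRing R] [AddCommGroup M] [Module R M]

theorem torsionBySet_inf_smul_top_le {x : R} (hx : IsSMulRegular M x) (s : Set R) :
    Submodule.torsionBySet R M s ⊓ x • ⊤ ≤ x • Submodule.torsionBySet R M s := by
  rintro _ ⟨hy, hxw⟩
  obtain ⟨w, -, rfl⟩ := Submodule.mem_smul_pointwise_iff_exists _ _ _ |>.1 hxw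
  refine Submodule.smul_mem_pointwise_smul _ _ _ ((Submodule.mem_torsionBySet_iff _ _).2 ?_)
  intro a
  apply hx
  dsimp only
  rw [smul_zero, smul_comm, (Submodule.mem_torsionBySet_iff _ _).1 hy a]

theorem torsionBySet_not_le_smul_top [IsNoetherian R M] {x : R} (hx : IsSMulRegular M x)
    (hxJ : x ∈ Ideal.jacobson (⊥ : Ideal R)) {s : Set R}
    (hs : Submodule.torsionBySet R M s ≠ ⊥) :
    ¬ Submodule.torsionBySet R M s ≤ x • ⊤ := by
  intro hle
  refine hs (Submodule.eq_bot_of_le_smul_of_le_jacobson_bot (Ideal.span {x}) _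
    (IsNoetherian.noetherian _) ?_ ((Ideal.span_singleton_le_iff_mem _).2 hxJ))
  rw [Submodule.ideal_span_singleton_smul]
  exact (le_inf le_rfl hle).trans (torsionBySet_inf_smul_top_le hx s)

/- `P = ann z` makes the submodule of elements killed by `P` nonzero, so by Nakayama it contains
some `y ∉ xM`; the class of `y` in `M / xM` is then killed by both `P` and `x`. -/
theorem exists_lt_mem_associatedPrimes_quotSMulTop [IsNoetherianRing R] [Module.Finite R M]
    {x : R} (hx : IsSMulRegular M x) (hxJ : x ∈ Ideal.jacobson (⊥ : Ideal R))
    {P : PrimeSpectrum R} (hP : P.asIdeal ∈ associatedPrimes R M) :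
    ∃ Q : PrimeSpectrum R, P < Q ∧ Q.asIdeal ∈ associatedPrimes R (QuotSMulTop x M) := by
  obtain ⟨-, z, hz⟩ := isAssociatedPrime_iff.1 (AssociatedPrimes.mem_iff.1 hP)
  have mem_P_iff (a : R) : a ∈ P.asIdeal ↔ a • z = 0 := by
    rw [hz, Submodule.mem_colon_singleton, Submodule.mem_bot]
  have z_ne_zero : z ≠ 0 := fun h =>
    P.isPrime.ne_top ((Ideal.eq_top_iff_one _).2 ((mem_P_iff 1).2 (by rw [h, smul_zero])))
  have x_notMem : x ∉ P.asIdeal := fun h =>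
    z_ne_zero (hx (by simpa only [smul_zero] using (mem_P_iff x).1 h))
  have torsion_ne_bot : Submodule.torsionBySet R M (P.asIdeal : Set R) ≠ ⊥ :=
    (Submodule.ne_bot_iff _).2
      ⟨z, (Submodule.mem_torsionBySet_iff _ _).2 fun a => (mem_P_iff a).1 a.2, z_ne_zero⟩
  obtain ⟨y, hy, hyx⟩ := Set.not_subset.1 (torsionBySet_not_le_smul_top hx hxJ torsion_ne_bot)
  let ybar : QuotSMulTop x M := Submodule.Quotient.mk y
  obtain ⟨Q, hQ, ann_le_Q⟩ := exists_le_isAssociatedPrime_of_isNoetherianRing R ybar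
    (mt (Submodule.Quotient.mk_eq_zero _).1 hyx)
  have mem_Q {a : R} (ha : a • y ∈ x • (⊤ : Submodule R M)) : a ∈ Q := ann_le_Q <| by
    rwa [Submodule.mem_colon_singleton, Submodule.mem_bot, ← Submodule.Quotient.mk_smul,
      Submodule.Quotient.mk_eq_zero]
  have P_le_Q : P.asIdeal ≤ Q := fun a ha => mem_Q <| by
    rw [(Submodule.mem_torsionBySet_iff _ _).1 hy ⟨a, ha⟩]
    exact zero_mem _
  have x_mem_Q : x ∈ Q := mem_Q (Submodule.smul_mem_pointwise_smul _ _ _ trivial)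
  exact ⟨⟨Q, hQ.isPrime⟩, lt_of_le_of_ne P_le_Q fun h => x_notMem (h ▸ x_mem_Q), hQ⟩

theorem length_le_coheight_of_isWeaklyRegular [IsNoetherianRing R] [Module.Finite R M]
    {rs : List R} (hrs : ∀ r ∈ rs, r ∈ Ideal.jacobson (⊥ : Ideal R))
    (hreg : RingTheory.Sequence.IsWeaklyRegular M rs) {P : PrimeSpectrum R}
    (hP : P.asIdeal ∈ associatedPrimes R M) :
    (rs.length : ℕ∞) ≤ Order.coheight P := by
  induction rs generalizing M P with
  | nil => simp
  | cons x rs ih =>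
    obtain ⟨hx, hreg⟩ := RingTheory.Sequence.isWeaklyRegular_cons_iff _ _ _ |>.1 hreg
    rw [List.forall_mem_cons] at hrs
    obtain ⟨Q, hPQ, hQ⟩ := exists_lt_mem_associatedPrimes_quotSMulTop hx hrs.1 hP
    calc ((x :: rs).length : ℕ∞) = rs.length + 1 := by simp
      _ ≤ Order.coheight Q + 1 := by gcongr; exact ih hrs.2 hreg hQ
      _ ≤ Order.coheight P := Order.coheight_add_one_le hPQ

end AssociatedPrimes

theorem isMin_of_krullDim_le_coheight {α : Type*} [Preorder α] [FiniteDimensionalOrder α] {a : α}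
    (ha : Order.krullDim α ≤ Order.coheight a) : IsMin a := by
  refine isMin_iff_forall_not_lt.2 fun b hb => ?_
  have lt := Order.coheight_strictAnti hb (Order.coheight_lt_top a)
  exact absurd ((Order.coheight_le_krullDim b).trans ha) (by simpa using lt)

section ExtVanishing

universe w

variable {C : Type*} [Category* C] [Abelian C] [HasExt.{w} C]

/-- The groups `Ext^i(X, Y)` vanish in all degrees `i < n`. For `X` the residue field of a local
ring this is the homological form of `depth Y ≥ n`. -/
def ExtVanishesBelow (X Y : C) (n : ℕ) : Prop :=
  ∀ i < n, Subsingleton (Abelian.Ext X Y i)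

namespace ExtVanishesBelow

variable {X Y Z : C} {m n : ℕ}

theorem mono (h : ExtVanishesBelow X Y n) (hmn : m ≤ n) : ExtVanishesBelow X Y m :=
  fun i hi => h i (hi.trans_le hmn)

theorem of_iso (h : ExtVanishesBelow X Y n) (e : Y ≅ Z) : ExtVanishesBelow X Z n := fun i hi =>
  have : Subsingleton ((Abelian.extFunctorObj X i).obj Y) := h i hi
  ((Abelian.extFunctorObj X i).mapIso e).addCommGroupIsoToAddEquiv.symm.toEquiv.subsingleton

theorem of_isBilimit {ι : Type*} [Finite ι] {Y : ι → C} {c : Limits.Bicone Y}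
    (hc : c.IsBilimit) (h : ∀ i, ExtVanishesBelow X (Y i) n) : ExtVanishesBelow X c.pt n :=
  fun i hi =>
    have := Fintype.ofFinite ι
    have := fun j => h j i hi
    (Abelian.Ext.addEquivBiproduct X hc i).toEquiv.subsingleton

variable {S : ShortComplex C}

theorem left_of_shortExact (hS : S.ShortExact) (h₂ : ExtVanishesBelow X S.X₂ m)
    (h₃ : ExtVanishesBelow X S.X₃ n) (hmn : m ≤ n + 1) : ExtVanishesBelow X S.X₁ m := by
  intro i hi
  have := h₂ i hi
  refine subsingleton_of_forall_eq 0 fun x => ?_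
  cases i with
  | zero =>
    have := hS.mono_f
    exact Abelian.Ext.postcomp_mk₀_injective_of_mono X S.f (Subsingleton.elim _ _)
  | succ i =>
    have := h₃ i (by omega)
    obtain ⟨y, rfl⟩ := Abelian.Ext.covariant_sequence_exact₁ X hS x (Subsingleton.elim _ _) rfl
    rw [Subsingleton.elim y 0, Abelian.Ext.zero_comp]

theorem right_of_shortExact (hS : S.ShortExact) (h₁ : ExtVanishesBelow X S.X₁ (n + 1))
    (h₂ : ExtVanishesBelow X S.X₂ n) : ExtVanishesBelow X S.X₃ n := by
  intro i hi
  have := h₁ (i + 1) (by omega)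
  have := h₂ i hi
  refine subsingleton_of_forall_eq 0 fun x => ?_
  obtain ⟨y, rfl⟩ := Abelian.Ext.covariant_sequence_exact₃ X hS x rfl (Subsingleton.elim _ _)
  rw [Subsingleton.elim y 0, Abelian.Ext.zero_comp]

end ExtVanishesBelow

theorem extClass_comp_mk₀_eq_zero_iff {S : ShortComplex C} (hS : S.ShortExact)
    {Y : C} (φ : S.X₁ ⟶ Y) :
    hS.extClass.comp (Abelian.Ext.mk₀ φ) (add_zero 1) = 0 ↔ ∃ ψ : S.X₂ ⟶ Y, S.f ≫ ψ = φ := by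
  constructor
  · intro h
    obtain ⟨z, hz⟩ := Abelian.Ext.contravariant_sequence_exact₁ hS Y _ _ h
    obtain ⟨ψ, rfl⟩ := (Abelian.Ext.mk₀_bijective _ _).2 z
    rw [Abelian.Ext.mk₀_comp_mk₀] at hz
    exact ⟨ψ, (Abelian.Ext.mk₀_bijective _ _).1 hz⟩
  · rintro ⟨ψ, rfl⟩
    rw [← Abelian.Ext.mk₀_comp_mk₀, hS.extClass_comp_assoc]

/-- Dimension shifting: for `0 → S.X₁ → S.X₂ → S.X₃ → 0` exact with `S.X₂` projective, the
connecting map is an isomorphism in positive degrees. -/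
noncomputable def extDimensionShift {A : Type*} [CommRing A] [Linear A C] {S : ShortComplex C}
    (hS : S.ShortExact) [Projective S.X₂] (Y : C) (n : ℕ) :
    Abelian.Ext S.X₁ Y (n + 1) ≃ₗ[A] Abelian.Ext S.X₃ Y (n + 1 + 1) :=
  LinearEquiv.ofBijective
    (Abelian.Ext.bilinearCompOfLinear A S.X₃ S.X₁ Y 1 (n + 1) (n + 1 + 1) (add_comm _ _)
      hS.extClass) <| by
    constructor
    · refine (injective_iff_map_eq_zero _).2 fun x hx => ?_
      obtain ⟨y, rfl⟩ := Abelian.Ext.contravariant_sequence_exact₁ hS Y x (add_comm _ _) hx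
      rw [Abelian.Ext.eq_zero_of_projective y, Abelian.Ext.comp_zero]
    · exact fun x => Abelian.Ext.contravariant_sequence_exact₃ hS Y x
        (Abelian.Ext.eq_zero_of_projective _) (add_comm _ _)

end ExtVanishing

section Modules

universe u

variable {R : Type u} [CommRing R]

theorem ExtVanishesBelow.pi {X N : ModuleCat.{u} R} {n : ℕ} (h : ExtVanishesBelow X N n)
    (ι : Type) [Finite ι] : ExtVanishesBelow X (ModuleCat.of R (ι → N)) n :=
  (of_isBilimit (Limits.biproduct.isBilimit fun _ : ι => N) fun _ => h).of_iso
    (ModuleCat.biproductIsoPi _)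

theorem exists_syzygy [IsNoetherianRing R] (N : ModuleCat.{u} R) [Module.Finite R N] (m : ℕ) :
    ∃ M : ModuleCat.{u} R, Module.Finite R M ∧
      (∀ X, ∀ d ≤ m, ExtVanishesBelow X (ModuleCat.of R R) d → ExtVanishesBelow X M d) ∧
      ∀ Y j, Nonempty (Abelian.Ext M Y (j + 1) ≃ₗ[R] Abelian.Ext N Y (j + m + 1)) := by
  induction m with
  | zero =>
    exact ⟨N, inferInstance, fun X d hd _ i hi => absurd hi (by omega), fun Y j => ⟨.refl R _⟩⟩
  | succ m ih =>
    obtain ⟨M, _, depth_M, ext_M⟩ := ih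
    obtain ⟨r, f, hf⟩ := Module.Finite.exists_fin' R M
    have hS := LinearMap.shortExact_shortComplexKer hf
    have : Projective f.shortComplexKer.X₂ :=
      (IsProjective.iff_projective (R := R) (Fin r → R)).1 inferInstance
    refine ⟨f.shortComplexKer.X₁, inferInstanceAs (Module.Finite R (LinearMap.ker f)), ?_, ?_⟩
    · intro X d hd hX
      exact .left_of_shortExact hS (hX.pi (Fin r))
        (depth_M X (d - 1) (by omega) (hX.mono (by omega))) (by omega)
    · intro Y j
      obtain ⟨e⟩ := ext_M Y (j + 1)
      rw [show j + (m + 1) + 1 = j + 1 + m + 1 by omega]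
      exact ⟨(extDimensionShift hS Y j).trans e⟩

theorem annihilator_le_annihilator_ext (N Y : ModuleCat.{u} R) (j : ℕ) :
    Module.annihilator R N ≤ Module.annihilator R (Abelian.Ext N Y j) := by
  intro r hr
  have smul_id_eq_zero : r • 𝟙 N = 0 := by
    simp [← ModuleCat.lsmul_eq_smul_id, Module.mem_annihilator_iff_lsmul_eq_zero.1 hr]
  refine Module.mem_annihilator.2 fun x => ?_
  rw [← Abelian.Ext.mk₀_id_comp x, ← Abelian.Ext.smul_comp, ← Abelian.Ext.mk₀_smul,
    smul_id_eq_zero, Abelian.Ext.mk₀_zero, Abelian.Ext.zero_comp]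

variable {A B D : Type u} [AddCommGroup A] [Module R A] [AddCommGroup B] [Module R B]
  [AddCommGroup D] [Module R D]

theorem shortExact_shortComplexOfCompEqZero {f : A →ₗ[R] B} {g : B →ₗ[R] D}
    (hf : Function.Injective f) (hfg : Function.Exact f g) (hg : Function.Surjective g) :
    (ModuleCat.shortComplexOfCompEqZero f g hfg.linearMap_comp_eq_zero).ShortExact where
  exact := ModuleCat.shortComplex_exact _ hfg
  mono_f := (ModuleCat.mono_iff_injective _).2 hf
  epi_g := (ModuleCat.epi_iff_surjective _).2 hg

variable [IsLocalRing R]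

variable (R) in
/-- The module `M` over the local ring `R` has depth at least `n`, in the sense that
`Ext^i_R(k, M) = 0` for `i < n`; in particular the zero module has infinite depth. -/
abbrev DepthGE (M : Type u) [AddCommGroup M] [Module R M] (n : ℕ) : Prop :=
  ExtVanishesBelow (ModuleCat.of R (ResidueField R)) (ModuleCat.of R M) n

theorem annihilator_residueField : Module.annihilator R (ResidueField R) = maximalIdeal R :=
  Ideal.annihilator_quotient

theorem DepthGE.mem_minimalPrimes [IsNoetherianRing R] {M : Type u} [AddCommGroup M] [Module R M]
    [Module.Finite R M] {n : ℕ} (hM : DepthGE R M n) (hdim : ringKrullDim R ≤ n) {P : Ideal R}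
    (hP : P ∈ associatedPrimes R M) : P ∈ minimalPrimes R := by
  have : Nontrivial M := not_subsingleton_iff_nontrivial.1 fun _ =>
    not_isAssociatedPrime_of_subsingleton hP
  have jacobson_bot : Ideal.jacobson (⊥ : Ideal R) = maximalIdeal R :=
    jacobson_eq_maximalIdeal _ bot_ne_top
  have smul_top_lt : maximalIdeal R • (⊤ : Submodule R M) < ⊤ :=
    lt_top_iff_ne_top.2 (Submodule.top_ne_ideal_smul_of_le_jacobson_annihilator
      (jacobson_bot ▸ Ideal.jacobson_mono bot_le)).symm
  have support_eq : Module.support R (ResidueField R) =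
      PrimeSpectrum.zeroLocus (maximalIdeal R : Set R) := by
    rw [Module.support_eq_zeroLocus, annihilator_residueField]
  obtain ⟨rs, rfl, rs_mem, rs_reg⟩ := ModuleCat.exists_isRegular_of_exists_subsingleton_ext
    (maximalIdeal R) n (ModuleCat.of R M) smul_top_lt (ModuleCat.of R (ResidueField R))
    support_eq hM
  let p : PrimeSpectrum R := ⟨P, hP.isPrime⟩
  have length_le : (rs.length : ℕ∞) ≤ Order.coheight p :=
    length_le_coheight_of_isWeaklyRegular (jacobson_bot ▸ rs_mem) rs_reg.toIsWeaklyRegular hP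
  exact PrimeSpectrum.isMin_iff.1 (isMin_of_krullDim_le_coheight
    (hdim.trans (by exact_mod_cast length_le)))

theorem DepthGE.quotient_range {n : ℕ} {f : A →ₗ[R] B} {g : B →ₗ[R] D}
    (hf : Function.Injective f) (hfg : Function.Exact f g) (hA : DepthGE R A (n + 2))
    (hB : DepthGE R B (n + 1)) (hD : DepthGE R D n) : DepthGE R (D ⧸ LinearMap.range g) n := by
  have depth_range : DepthGE R (LinearMap.range g) (n + 1) :=
    .right_of_shortExact (shortExact_shortComplexOfCompEqZero (g := g.rangeRestrict) hf
      (fun b => Subtype.ext_iff.trans (hfg b)) g.surjective_rangeRestrict) hA hB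
  exact .right_of_shortExact (shortExact_shortComplexOfCompEqZero
    (LinearMap.range g).injective_subtype (LinearMap.exact_subtype_mkQ _)
    (Submodule.mkQ_surjective _)) depth_range hD

theorem DepthGE.eq_zero_of_maximalIdeal_smul (hA : DepthGE R A 1) {a : A}
    (ha : ∀ r ∈ maximalIdeal R, r • a = 0) : a = 0 := by
  have := hA 0 one_pos
  have : Subsingleton (ModuleCat.of R (ResidueField R) ⟶ ModuleCat.of R A) :=
    Abelian.Ext.addEquiv₀.symm.toEquiv.subsingleton
  let φ : ResidueField R →ₗ[R] A :=
    Submodule.liftQ (maximalIdeal R) (LinearMap.toSpanSingleton R A a) ha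
  have φ_eq_zero : φ = 0 := congrArg ModuleCat.Hom.hom
    (Subsingleton.elim (ModuleCat.ofHom φ) 0)
  calc a = φ (Submodule.Quotient.mk 1) := (one_smul R a).symm
    _ = 0 := DFunLike.congr_fun φ_eq_zero _

theorem subsingleton_ext_one_of_depthGE {F M Ω : Type u} [AddCommGroup F] [Module R F]
    [Module.Projective R F] [AddCommGroup M] [Module R M] [AddCommGroup Ω] [Module R Ω]
    {f : F →ₗ[R] M} (hf : Function.Surjective f) (hM : DepthGE R (M →ₗ[R] Ω) 3)
    (hF : DepthGE R (F →ₗ[R] Ω) 2) (hK : DepthGE R (LinearMap.ker f →ₗ[R] Ω) 1)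
    (hann : maximalIdeal R ≤
      Module.annihilator R (Abelian.Ext (ModuleCat.of R M) (ModuleCat.of R Ω) 1)) :
    Subsingleton (Abelian.Ext (ModuleCat.of R M) (ModuleCat.of R Ω) 1) := by
  have hS := LinearMap.shortExact_shortComplexKer hf
  have : Projective f.shortComplexKer.X₂ :=
    (IsProjective.iff_projective (R := R) F).1 inferInstance
  let restrict : (F →ₗ[R] Ω) →ₗ[R] (LinearMap.ker f →ₗ[R] Ω) :=
    LinearMap.lcomp R Ω (LinearMap.ker f).subtype
  -- Since `F` is projective, this quotient is `Ext¹(M, Ω)`.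
  have depth_quotient : DepthGE R ((LinearMap.ker f →ₗ[R] Ω) ⧸ LinearMap.range restrict) 1 :=
    .quotient_range (LinearMap.lcomp_injective_of_surjective f hf)
      (LinearMap.exact_lcomp_of_exact_of_surjective Ω (LinearMap.exact_subtype_ker_map f) hf)
      hM hF hK
  have extClass_comp_eq_zero_iff (φ : f.shortComplexKer.X₁ ⟶ ModuleCat.of R Ω) :
      hS.extClass.comp (Abelian.Ext.mk₀ φ) (add_zero 1) = 0 ↔
        φ.hom ∈ LinearMap.range restrict := by
    rw [extClass_comp_mk₀_eq_zero_iff]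
    exact ⟨fun ⟨ψ, hψ⟩ => ⟨ψ.hom, congrArg ModuleCat.Hom.hom hψ⟩,
      fun ⟨ψ, hψ⟩ => ⟨ModuleCat.ofHom ψ, ModuleCat.hom_ext hψ⟩⟩
  refine subsingleton_of_forall_eq 0 fun e => ?_
  obtain ⟨y, rfl⟩ := Abelian.Ext.contravariant_sequence_exact₃ hS (ModuleCat.of R Ω) e
    (Abelian.Ext.eq_zero_of_projective _) (add_zero 1)
  obtain ⟨φ, rfl⟩ := (Abelian.Ext.mk₀_bijective _ _).2 y
  refine (extClass_comp_eq_zero_iff φ).2 ((Submodule.Quotient.mk_eq_zero _).1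
    (depth_quotient.eq_zero_of_maximalIdeal_smul fun r hr => ?_))
  refine (Submodule.Quotient.mk_eq_zero _).2 ((extClass_comp_eq_zero_iff (r • φ)).1 ?_)
  rw [Abelian.Ext.mk₀_smul, Abelian.Ext.comp_smul]
  exact Module.mem_annihilator.1 (hann hr) _

theorem cm_dualizing_unique_general [IsNoetherianRing R]
    {n : ℕ} (hn : 3 ≤ n) (hdim : ringKrullDim R = n) (hR : DepthGE R R n)
    {Ω : Type u} [AddCommGroup Ω] [Module R Ω]
    (hdual : ∀ (M : Type u) [AddCommGroup M] [Module R M] [Module.Finite R M],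
      (∀ P ∈ associatedPrimes R M, P ∈ minimalPrimes R) → DepthGE R M n →
        DepthGE R (M →ₗ[R] Ω) n) {j : ℕ} (hj : j ≠ n) :
    Subsingleton (Abelian.Ext (ModuleCat.of R (ResidueField R)) (ModuleCat.of R Ω) j) := by
  have depth_hom (M : Type u) [AddCommGroup M] [Module R M] [Module.Finite R M]
      (hM : DepthGE R M n) : DepthGE R (M →ₗ[R] Ω) n :=
    hdual M (fun _ => hM.mem_minimalPrimes hdim.le) hM
  obtain hlt | hgt := hj.lt_or_gt
  · exact (depth_hom R hR).of_iso (LinearMap.ringLmapEquivSelf R R Ω).toModuleIso j hlt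
  obtain ⟨m, rfl⟩ : ∃ m, j = 0 + m + 1 := ⟨j - 1, by omega⟩
  obtain ⟨M, _, depth_syzygy, ext_M⟩ := exists_syzygy (ModuleCat.of R (ResidueField R)) m
  obtain ⟨e⟩ := ext_M (ModuleCat.of R Ω) 0
  obtain ⟨r, f, hf⟩ := Module.Finite.exists_fin' R M
  have depth_M : DepthGE R M n := depth_syzygy _ n (by omega) hR
  have depth_free : DepthGE R (Fin r → R) n := hR.pi (Fin r)
  have depth_ker : DepthGE R (LinearMap.ker f) n :=
    .left_of_shortExact (LinearMap.shortExact_shortComplexKer hf) depth_free depth_M (by omega)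
  have ext_killed : maximalIdeal R ≤
      Module.annihilator R (Abelian.Ext M (ModuleCat.of R Ω) 1) :=
    calc maximalIdeal R = Module.annihilator R (ResidueField R) := annihilator_residueField.symm
      _ ≤ _ := annihilator_le_annihilator_ext (ModuleCat.of R (ResidueField R)) _ _
      _ = _ := LinearEquiv.annihilator_eq e.symm
  have := subsingleton_ext_one_of_depthGE hf ((depth_hom M depth_M).mono hn)
    ((depth_hom _ depth_free).mono (by omega)) ((depth_hom _ depth_ker).mono (by omega)) ext_killed
  exact e.symm.toEquiv.subsingleton

end Modules

theorem subsingleton_extM_iff {R M N : Type} [CommRing R] [AddCommGroup M] [Module R M]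
    [AddCommGroup N] [Module R N] {n : ℕ} :
    Subsingleton (extM R M N n) ↔
      Subsingleton (Abelian.Ext (ModuleCat.of R M) (ModuleCat.of R N) n) :=
  subsingleton_derivedExt_iff_subsingleton_abelianExt _ _ n

/-- **(Dao's appendix.)** Let `R` be local CM of dimension `n ≥ 3` with dualizing module `ω`.
If `Ω` is a finite torsion-free module such that `Hom_R(M, Ω)` is torsion free and maximal CM
for every torsion-free MCM module `M`, then `Ext^j(k, Ω) = 0` for all `j ≠ n`, i.e. `Ω` is a
direct sum of copies of `ω`. -/
theorem cm_dualizing_unique (R : Type) [CommRing R] [IsNoetherianRing R] [IsLocalRing R]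
    (n : ℕ) (hn : 3 ≤ n) (hdim : ringKrullDim R = n)
    (hCM : ∀ i : ℕ, i < n → Subsingleton (extM R (ResidueField R) R i))
    (ω : Type) [AddCommGroup ω] [Module R ω] [Module.Finite R ω]
    (hω1 : ∀ i : ℕ, i ≠ n → Subsingleton (extM R (ResidueField R) ω i))
    (hω2 : Nonempty ((extM R (ResidueField R) ω n) ≃ₗ[R] ResidueField R))
    (Ω : Type) [AddCommGroup Ω] [Module R Ω] [Module.Finite R Ω]
    (hΩtf : ∀ P ∈ associatedPrimes R Ω, P ∈ minimalPrimes R)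
    (hdual : ∀ (M : Type) [AddCommGroup M] [Module R M] [Module.Finite R M],
      (∀ P ∈ associatedPrimes R M, P ∈ minimalPrimes R) →
      (∀ i : ℕ, i < n → Subsingleton (extM R (ResidueField R) M i)) →
      ((∀ P ∈ associatedPrimes R (M →ₗ[R] Ω), P ∈ minimalPrimes R) ∧
        ∀ i : ℕ, i < n → Subsingleton (extM R (ResidueField R) (M →ₗ[R] Ω) i))) :
    ∀ j : ℕ, j ≠ n → Subsingleton (extM R (ResidueField R) Ω j) := by
  simp only [subsingleton_extM_iff] at hCM hdual ⊢
  exact fun _ => cm_dualizing_unique_general hn hdim hCM fun M _ _ _ htf hM => (hdual M htf hM).2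
end
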